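/- For every ε > 0 there exists K > 0 such that for all k ∈ ℂ with |k| ≥ K and all x ∈ [0,ℓ] one has |s(x,k) − sin(kx)/k + (cos(kx)/k²)·(1/2)∫₀ˣ q(t) dt − (sin(kx)/k³)·[ (1/4)(q(x) + q(0)) − (1/8)(∫₀ˣ q(t) dt)² ]| ≤ ε · e^{|Im k| x} / |k|³. -/

import Mathlib

open MeasureTheory intervalIntegral Real

/-!
Let `T` be the Volterra operator of the equation `s = s₀ + T s` with `s₀ = sin (k x) / k`, and let
`v` be the proposed expansion up to order `k⁻³`. Product-to-sum formulas and integration by parts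
turn `T s₀` and the next iterate into the explicit terms of `v` plus `k⁻³` times integrals
`∫₀ˣ sin (k (x - 2t)) g(t) dt` with `g ∈ L¹`. By a Riemann-Lebesgue argument uniform in `x` and `k`
these are `o(e^{|Im k| x})`, so the residual `s₀ + T v - v` is `o(k⁻³ e^{|Im k| x})`. In the sup
norm weighted by `e^{-|Im k| x}`, the operator `T` has norm `O(1 / |k|)`, so for large `|k|` the
difference `s - v`, which solves the same equation with the residual as source, is at most twice as
large as the residual.
-/

open Bornology Filter Set
open scoped ContDiff

section TrigonometricBounds

lemma norm_exp_mul_I_le_exp_abs_im (z : ℂ) : ‖Complex.exp (z * Complex.I)‖ ≤ exp |z.im| := by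
  rw [Complex.norm_exp]
  exact exp_le_exp.2 (by simpa using neg_le_abs z.im)

lemma norm_sin_le_exp_abs_im (z : ℂ) : ‖Complex.sin z‖ ≤ exp |z.im| := by
  have hsub := norm_sub_le (Complex.exp (-z * Complex.I)) (Complex.exp (z * Complex.I))
  have hneg := norm_exp_mul_I_le_exp_abs_im (-z)
  have hpos := norm_exp_mul_I_le_exp_abs_im z
  rw [Complex.neg_im, abs_neg] at hneg
  rw [Complex.sin, norm_div, norm_mul, Complex.norm_I, mul_one, Complex.norm_two]
  linarith

lemma norm_cos_le_exp_abs_im (z : ℂ) : ‖Complex.cos z‖ ≤ exp |z.im| := by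
  have hadd := norm_add_le (Complex.exp (z * Complex.I)) (Complex.exp (-z * Complex.I))
  have hneg := norm_exp_mul_I_le_exp_abs_im (-z)
  have hpos := norm_exp_mul_I_le_exp_abs_im z
  rw [Complex.neg_im, abs_neg] at hneg
  rw [Complex.cos, norm_div, Complex.norm_two]
  linarith

lemma abs_im_mul_ofReal_le {k : ℂ} {r x : ℝ} (hr : |r| ≤ x) : |(k * r).im| ≤ |k.im| * x := by
  rw [Complex.im_mul_ofReal, abs_mul]
  gcongr

lemma norm_sin_mul_ofReal_le {k : ℂ} {r x : ℝ} (hr : |r| ≤ x) :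
    ‖Complex.sin (k * r)‖ ≤ exp (|k.im| * x) :=
  (norm_sin_le_exp_abs_im _).trans (exp_le_exp.2 (abs_im_mul_ofReal_le hr))

lemma norm_cos_mul_ofReal_le {k : ℂ} {r x : ℝ} (hr : |r| ≤ x) :
    ‖Complex.cos (k * r)‖ ≤ exp (|k.im| * x) :=
  (norm_cos_le_exp_abs_im _).trans (exp_le_exp.2 (abs_im_mul_ofReal_le hr))

end TrigonometricBounds

section IteratedIntegrals

variable {𝕜 : Type*} [RCLike 𝕜] {a b : ℝ}

lemma integral_mul_primitive_eq_integral_mul {f g : ℝ → 𝕜} (hab : a ≤ b)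
    (hf : IntervalIntegrable f volume a b) (hg : IntervalIntegrable g volume a b) :
    ∫ t in a..b, f t * ∫ u in a..t, g u = ∫ u in a..b, (∫ t in u..b, f t) * g u := by
  let H : ℝ × ℝ → 𝕜 := {p | p.2 ≤ p.1}.indicator fun p ↦ f p.1 * g p.2
  have hH : Integrable H ((volume.restrict (Ioc a b)).prod (volume.restrict (Ioc a b))) :=
    (hf.1.mul_prod hg.1).indicator (measurableSet_le measurable_snd measurable_fst)
  have inner_left (t : ℝ) (ht : t ∈ Ioc a b) :
      f t * ∫ u in a..t, g u = ∫ u in Ioc a b, H (t, u) := by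
    have hcut : Ioc a b ∩ Iic t = Ioc a t := by grind
    calc f t * ∫ u in a..t, g u
        = ∫ u in Ioc a b, (Iic t).indicator (fun u ↦ f t * g u) u := by
          rw [setIntegral_indicator measurableSet_Iic, hcut, integral_of_le ht.1.le,
            MeasureTheory.integral_const_mul]
      _ = ∫ u in Ioc a b, H (t, u) := rfl
  have inner_right (u : ℝ) (hu : u ∈ Ioc a b) :
      (∫ t in u..b, f t) * g u = ∫ t in Ioc a b, H (t, u) := by
    have hcut : Ioc a b ∩ Ici u = Icc u b := by grind
    calc (∫ t in u..b, f t) * g u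
        = ∫ t in Ioc a b, (Ici u).indicator (fun t ↦ f t * g u) t := by
          rw [setIntegral_indicator measurableSet_Ici, hcut, integral_Icc_eq_integral_Ioc,
            integral_of_le hu.2, MeasureTheory.integral_mul_const]
      _ = ∫ t in Ioc a b, H (t, u) := rfl
  rw [integral_of_le hab, integral_of_le hab, setIntegral_congr_fun measurableSet_Ioc inner_left,
    setIntegral_congr_fun measurableSet_Ioc inner_right]
  exact integral_integral_swap (f := fun t u ↦ H (t, u)) hH

lemma intervalIntegrable_mul_primitive_self {f : ℝ → 𝕜} (hf : IntervalIntegrable f volume a b) :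
    IntervalIntegrable (fun t ↦ f t * ∫ u in a..t, f u) volume a b :=
  hf.mul_continuousOn (continuousOn_primitive_interval' hf left_mem_uIcc)

lemma integral_mul_primitive_self {f : ℝ → 𝕜} (hab : a ≤ b) (hf : IntervalIntegrable f volume a b) :
    ∫ t in a..b, f t * ∫ u in a..t, f u = (∫ t in a..b, f t) ^ 2 / 2 := by
  have hswap : ∫ t in a..b, f t * ∫ u in a..t, f u
      = (∫ t in a..b, f t) ^ 2 - ∫ t in a..b, f t * ∫ u in a..t, f u := by
    calc ∫ t in a..b, f t * ∫ u in a..t, f u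
        = ∫ u in a..b, (∫ t in u..b, f t) * f u :=
          integral_mul_primitive_eq_integral_mul hab hf hf
      _ = ∫ u in a..b, ((∫ t in a..b, f t) * f u - f u * ∫ t in a..u, f t) := by
          refine integral_congr fun u hu ↦ ?_
          have hau := hf.mono_set (uIcc_subset_uIcc_left hu)
          rw [← integral_interval_sub_left hf hau]
          ring
      _ = (∫ t in a..b, f t) ^ 2 - ∫ t in a..b, f t * ∫ u in a..t, f u := by
          rw [intervalIntegral.integral_sub (hf.const_mul _)
              (intervalIntegrable_mul_primitive_self hf),
            intervalIntegral.integral_const_mul, sq]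
  linear_combination hswap / 2

lemma continuousOn_of_eq_add_integral {E : Type*} [NormedAddCommGroup E] [NormedSpace ℝ E]
    {f f' : ℝ → E} (hf' : IntervalIntegrable f' volume a b)
    (hf : ∀ x ∈ Icc a b, f x = f a + ∫ t in a..x, f' t) : ContinuousOn f (Icc a b) :=
  ((continuousOn_const.add (continuousOn_primitive_interval' hf' left_mem_uIcc)).mono
    Icc_subset_uIcc).congr hf

lemma integral_deriv_mul_eq_of_eq_add_integral {F F' f f' : ℝ → 𝕜} (hab : a ≤ b)
    (hF : ∀ t ∈ uIcc a b, HasDerivAt F (F' t) t) (hF' : IntervalIntegrable F' volume a b)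
    (hf' : IntervalIntegrable f' volume a b)
    (hf : ∀ x ∈ Icc a b, f x = f a + ∫ t in a..x, f' t) :
    ∫ t in a..b, F' t * f t = F b * f b - F a * f a - ∫ t in a..b, F t * f' t := by
  have hFcont : ContinuousOn F (uIcc a b) := fun t ht ↦ (hF t ht).continuousAt.continuousWithinAt
  have hprim := continuousOn_primitive_interval' hf' left_mem_uIcc
  have hFTC (u : ℝ) (hu : u ∈ uIcc a b) : ∫ t in u..b, F' t = F b - F u :=
    have hsub := uIcc_subset_uIcc_right hu
    integral_eq_sub_of_hasDerivAt (fun t ht ↦ hF t (hsub ht)) (hF'.mono_set hsub)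
  calc ∫ t in a..b, F' t * f t
      = ∫ t in a..b, (F' t * f a + F' t * ∫ u in a..t, f' u) := by
        refine integral_congr fun t ht ↦ ?_
        rw [uIcc_of_le hab] at ht
        rw [hf t ht, mul_add]
    _ = (∫ t in a..b, F' t) * f a + ∫ u in a..b, (∫ t in u..b, F' t) * f' u := by
        rw [intervalIntegral.integral_add (hF'.mul_const _) (hF'.mul_continuousOn hprim),
          intervalIntegral.integral_mul_const, integral_mul_primitive_eq_integral_mul hab hF' hf']
    _ = (F b - F a) * f a + ∫ u in a..b, (F b * f' u - F u * f' u) := by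
        rw [hFTC a left_mem_uIcc]
        congr 1
        refine integral_congr fun u hu ↦ ?_
        rw [hFTC u hu, sub_mul]
    _ = (F b - F a) * f a + (F b * (∫ u in a..b, f' u) - ∫ u in a..b, F u * f' u) := by
        rw [intervalIntegral.integral_sub (hf'.const_mul _) (hf'.continuousOn_mul hFcont),
          intervalIntegral.integral_const_mul]
    _ = F b * f b - F a * f a - ∫ t in a..b, F t * f' t := by
        rw [hf b (right_mem_Icc.2 hab)]
        ring

lemma integral_norm_mono_right {E : Type*} [NormedAddCommGroup E] {f : ℝ → E} {x : ℝ}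
    (hx : x ∈ Icc a b) (hf : IntervalIntegrable f volume a b) :
    ∫ t in a..x, ‖f t‖ ≤ ∫ t in a..b, ‖f t‖ :=
  integral_mono_interval le_rfl hx.1 hx.2 (.of_forall fun _ ↦ norm_nonneg _) hf.norm

end IteratedIntegrals

section Approximation

lemma eventually_cobounded_const_div_norm_le {E : Type*} [NormedAddCommGroup E] (C : ℝ) {ε : ℝ}
    (hε : 0 < ε) : ∀ᶠ v : E in cobounded E, C / ‖v‖ ≤ ε :=
  (tendsto_norm_cobounded_atTop.const_div_atTop C).eventually_le_const hε

lemma exists_contDiff_integral_norm_sub_le {E F : Type*} [NormedAddCommGroup E] [NormedSpace ℝ E]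
    [FiniteDimensional ℝ E] [MeasurableSpace E] [BorelSpace E] {μ : Measure E}
    [IsFiniteMeasureOnCompacts μ] [NormedAddCommGroup F] [NormedSpace ℝ F] {g : E → F}
    (hg : Integrable g μ) {ε : ℝ} (hε : 0 < ε) :
    ∃ h : E → F, ContDiff ℝ ∞ h ∧ ∫ t, ‖g t - h t‖ ∂μ ≤ ε := by
  obtain ⟨h, hsupp, hsmooth, happrox⟩ :=
    MemLp.exist_eLpNorm_sub_le ENNReal.one_ne_top le_rfl (memLp_one_iff_integrable.2 hg) hε
  refine ⟨h, hsmooth, ?_⟩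
  have hgh : Integrable (g - h) μ :=
    hg.sub (hsmooth.continuous.integrable_of_hasCompactSupport hsupp)
  rw [eLpNorm_one_eq_lintegral_enorm] at happrox
  calc ∫ t, ‖g t - h t‖ ∂μ = (∫⁻ t, ‖(g - h) t‖ₑ ∂μ).toReal :=
        integral_norm_eq_lintegral_enorm hgh.aestronglyMeasurable
    _ ≤ ε := ENNReal.toReal_le_of_le_ofReal hε.le happrox

end Approximation

section OscillatoryIntegral

/-- The oscillatory integral `∫₀ˣ sin (k (x - 2t)) g(t) dt`. -/
noncomputable def oscillatoryIntegral (k : ℂ) (g : ℝ → ℂ) (x : ℝ) : ℂ :=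
  ∫ t in (0 : ℝ)..x, Complex.sin (k * ↑(x - 2 * t)) * g t

variable {k : ℂ} {g g' : ℝ → ℂ} {x ℓ ε : ℝ}

lemma abs_sub_two_mul_le {t : ℝ} (ht : t ∈ Icc 0 x) : |x - 2 * t| ≤ x :=
  abs_le.2 ⟨by linarith [ht.2], by linarith [ht.1]⟩

lemma hasDerivAt_cos_mul_sub_two_mul (hk : k ≠ 0) (x t : ℝ) :
    HasDerivAt (fun t : ℝ ↦ Complex.cos (k * ↑(x - 2 * t)) / (2 * k))
      (Complex.sin (k * ↑(x - 2 * t))) t := by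
  have hphase : HasDerivAt (fun t : ℝ ↦ x - 2 * t) (-2) t := by
    simpa using ((hasDerivAt_id t).const_mul 2).const_sub x
  refine (((Complex.hasDerivAt_cos _).comp t (hphase.ofReal_comp.const_mul k)).div_const
    (2 * k)).congr_deriv ?_
  push_cast
  field_simp

lemma hasDerivAt_neg_sin_mul_sub_two_mul (hk : k ≠ 0) (x t : ℝ) :
    HasDerivAt (fun t : ℝ ↦ -Complex.sin (k * ↑(x - 2 * t)) / (2 * k))
      (Complex.cos (k * ↑(x - 2 * t))) t := by
  have hphase : HasDerivAt (fun t : ℝ ↦ x - 2 * t) (-2) t := by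
    simpa using ((hasDerivAt_id t).const_mul 2).const_sub x
  refine (((Complex.hasDerivAt_sin _).comp t (hphase.ofReal_comp.const_mul k)).neg.div_const
    (2 * k)).congr_deriv ?_
  push_cast
  field_simp

lemma oscillatoryIntegral_sub {f : ℝ → ℂ} (hf : IntervalIntegrable f volume 0 x)
    (hg : IntervalIntegrable g volume 0 x) :
    oscillatoryIntegral k (f - g) x = oscillatoryIntegral k f x - oscillatoryIntegral k g x := by
  have hsin : Continuous fun t : ℝ ↦ Complex.sin (k * ↑(x - 2 * t)) := by fun_prop
  simp only [oscillatoryIntegral, Pi.sub_apply, mul_sub]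
  exact intervalIntegral.integral_sub (hf.continuousOn_mul hsin.continuousOn)
    (hg.continuousOn_mul hsin.continuousOn)

lemma norm_oscillatoryIntegral_le (hx : 0 ≤ x) (hg : IntervalIntegrable g volume 0 x) :
    ‖oscillatoryIntegral k g x‖ ≤ (∫ t in (0 : ℝ)..x, ‖g t‖) * exp (|k.im| * x) := by
  rw [← intervalIntegral.integral_mul_const]
  refine norm_integral_le_of_norm_le hx (.of_forall fun t ht ↦ ?_) (hg.norm.mul_const _)
  rw [norm_mul, mul_comm ‖g t‖]
  gcongr
  exact norm_sin_mul_ofReal_le (abs_sub_two_mul_le (Ioc_subset_Icc_self ht))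

lemma norm_oscillatoryIntegral_le_div_norm (hk : k ≠ 0) (hx : 0 ≤ x)
    (hg' : IntervalIntegrable g' volume 0 x)
    (hg : ∀ t ∈ Icc 0 x, g t = g 0 + ∫ u in (0 : ℝ)..t, g' u) :
    ‖oscillatoryIntegral k g x‖ ≤
      (‖g 0‖ + ∫ t in (0 : ℝ)..x, ‖g' t‖) / ‖k‖ * exp (|k.im| * x) := by
  set V := ∫ t in (0 : ℝ)..x, ‖g' t‖
  set E := exp (|k.im| * x)
  let F (t : ℝ) : ℂ := Complex.cos (k * ↑(x - 2 * t)) / (2 * k)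
  have hF (t : ℝ) (ht : t ∈ Icc 0 x) : ‖F t‖ ≤ E / (2 * ‖k‖) := by
    rw [norm_div, norm_mul, Complex.norm_two]
    gcongr
    exact norm_cos_mul_ofReal_le (abs_sub_two_mul_le ht)
  have hgx : ‖g x‖ ≤ ‖g 0‖ + V := by
    rw [hg x (right_mem_Icc.2 hx)]
    exact (norm_add_le _ _).trans (by gcongr; exact norm_integral_le_integral_norm hx)
  have hboundary (t : ℝ) (ht : t ∈ Icc 0 x) : ‖F t * g t‖ ≤ E / (2 * ‖k‖) * ‖g t‖ := by
    rw [norm_mul]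
    gcongr
    exact hF t ht
  have hintegral : ‖∫ t in (0 : ℝ)..x, F t * g' t‖ ≤ E / (2 * ‖k‖) * V := by
    rw [← intervalIntegral.integral_const_mul]
    refine norm_integral_le_of_norm_le hx (.of_forall fun t ht ↦ ?_) (hg'.norm.const_mul _)
    rw [norm_mul]
    gcongr
    exact hF t (Ioc_subset_Icc_self ht)
  have hparts : oscillatoryIntegral k g x = F x * g x - F 0 * g 0 - ∫ t in (0 : ℝ)..x, F t * g' t :=
    integral_deriv_mul_eq_of_eq_add_integral hx
      (fun t _ ↦ hasDerivAt_cos_mul_sub_two_mul hk x t)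
      (Continuous.intervalIntegrable (by fun_prop) _ _) hg' hg
  calc ‖oscillatoryIntegral k g x‖
      ≤ ‖F x * g x‖ + ‖F 0 * g 0‖ + ‖∫ t in (0 : ℝ)..x, F t * g' t‖ := by
        rw [hparts]
        exact (norm_sub_le _ _).trans (by gcongr; exact norm_sub_le _ _)
    _ ≤ E / (2 * ‖k‖) * (‖g 0‖ + V) + E / (2 * ‖k‖) * ‖g 0‖ + E / (2 * ‖k‖) * V := by
        gcongr
        · exact (hboundary x (right_mem_Icc.2 hx)).trans (by gcongr)
        · exact hboundary 0 (left_mem_Icc.2 hx)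
    _ = (‖g 0‖ + V) / ‖k‖ * E := by
        field_simp
        ring

-- Riemann-Lebesgue: `g` is `L¹`-close to a smooth function, for which integration by parts gains a
-- factor `1 / ‖k‖`.
lemma eventually_norm_oscillatoryIntegral_le (hg : IntervalIntegrable g volume 0 ℓ) (hε : 0 < ε) :
    ∀ᶠ k in cobounded ℂ, ∀ x ∈ Icc 0 ℓ, ‖oscillatoryIntegral k g x‖ ≤ ε * exp (|k.im| * x) := by
  obtain ⟨h, hsmooth, hgh⟩ := exists_contDiff_integral_norm_sub_le hg.1 (half_pos hε)
  have hcont : Continuous h := hsmooth.continuous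
  have hderiv : Continuous (deriv h) := hsmooth.continuous_deriv (by simp)
  have hprimitive (t : ℝ) : h t = h 0 + ∫ u in (0 : ℝ)..t, deriv h u := by
    rw [integral_deriv_eq_sub (fun u _ ↦ hsmooth.differentiable (by simp) u)
      (hderiv.intervalIntegrable _ _), add_sub_cancel]
  filter_upwards [eventually_ne_cobounded 0,
    eventually_cobounded_const_div_norm_le (‖h 0‖ + ∫ t in (0 : ℝ)..ℓ, ‖deriv h t‖) (half_pos hε)]
    with k hk hkh x hx
  have hgx : IntervalIntegrable g volume 0 x :=
    hg.mono_set (uIcc_subset_uIcc_left (Icc_subset_uIcc hx))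
  have hhx : IntervalIntegrable h volume 0 x := hcont.intervalIntegrable _ _
  have hrough : ‖oscillatoryIntegral k (g - h) x‖ ≤ ε / 2 * exp (|k.im| * x) := by
    refine (norm_oscillatoryIntegral_le hx.1 (hgx.sub hhx)).trans ?_
    gcongr
    refine (integral_norm_mono_right hx (hg.sub (hcont.intervalIntegrable _ _))).trans ?_
    rwa [integral_of_le (hx.1.trans hx.2)]
  have hsmall : ‖oscillatoryIntegral k h x‖ ≤ ε / 2 * exp (|k.im| * x) := by
    refine (norm_oscillatoryIntegral_le_div_norm hk hx.1 (hderiv.intervalIntegrable _ _)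
      fun t _ ↦ hprimitive t).trans
      (mul_le_mul_of_nonneg_right (le_trans ?_ hkh) (exp_pos _).le)
    gcongr
    exact integral_norm_mono_right hx (hderiv.intervalIntegrable _ _)
  calc ‖oscillatoryIntegral k g x‖
      = ‖oscillatoryIntegral k (g - h) x + oscillatoryIntegral k h x‖ := by
        rw [oscillatoryIntegral_sub hgx hhx, sub_add_cancel]
    _ ≤ ε * exp (|k.im| * x) := by linarith [norm_add_le_of_le hrough hsmall]

end OscillatoryIntegral

section VolterraEquation

/-- The Volterra operator `f ↦ ∫₀ˣ (sin (k (x - t)) / k) q(t) f(t) dt`, which solves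
`u'' + k² u = q f` with zero initial data. -/
noncomputable def volterraOp (k : ℂ) (q f : ℝ → ℂ) (x : ℝ) : ℂ :=
  ∫ t in (0 : ℝ)..x, Complex.sin (k * ((x : ℂ) - t)) / k * q t * f t

variable {k : ℂ} {q f g u v : ℝ → ℂ} {B x ℓ : ℝ}

lemma volterraOp_add (hq : IntervalIntegrable q volume 0 x) (hf : ContinuousOn f (uIcc 0 x))
    (hg : ContinuousOn g (uIcc 0 x)) :
    volterraOp k q (f + g) x = volterraOp k q f x + volterraOp k q g x := by
  have hkernel : IntervalIntegrable (fun t : ℝ ↦ Complex.sin (k * ((x : ℂ) - t)) / k * q t)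
      volume 0 x := hq.continuousOn_mul (by fun_prop)
  simp only [volterraOp, Pi.add_apply, mul_add]
  exact intervalIntegral.integral_add (hkernel.mul_continuousOn hf) (hkernel.mul_continuousOn hg)

lemma norm_volterraOp_le (hx : 0 ≤ x) (hq : IntervalIntegrable q volume 0 x)
    (hf : ∀ t ∈ Icc 0 x, ‖f t‖ ≤ B * exp (|k.im| * t)) :
    ‖volterraOp k q f x‖ ≤ (∫ t in (0 : ℝ)..x, ‖q t‖) / ‖k‖ * B * exp (|k.im| * x) := by
  have hpointwise (t : ℝ) (ht : t ∈ Ioc 0 x) :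
      ‖Complex.sin (k * ((x : ℂ) - t)) / k * q t * f t‖
        ≤ ‖q t‖ * (B * exp (|k.im| * x) / ‖k‖) := by
    have hsin : ‖Complex.sin (k * ((x : ℂ) - t))‖ ≤ exp (|k.im| * (x - t)) := by
      rw [← Complex.ofReal_sub]
      exact norm_sin_mul_ofReal_le (abs_of_nonneg (sub_nonneg.2 ht.2)).le
    rw [norm_mul, norm_mul, norm_div]
    calc ‖Complex.sin (k * ((x : ℂ) - t))‖ / ‖k‖ * ‖q t‖ * ‖f t‖
        ≤ exp (|k.im| * (x - t)) / ‖k‖ * ‖q t‖ * (B * exp (|k.im| * t)) := by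
          gcongr
          exact hf t (Ioc_subset_Icc_self ht)
      _ = ‖q t‖ * (B * (exp (|k.im| * (x - t)) * exp (|k.im| * t)) / ‖k‖) := by ring
      _ = ‖q t‖ * (B * exp (|k.im| * x) / ‖k‖) := by rw [← exp_add, ← mul_add, sub_add_cancel]
  calc ‖volterraOp k q f x‖
      ≤ ∫ t in (0 : ℝ)..x, ‖q t‖ * (B * exp (|k.im| * x) / ‖k‖) :=
        norm_integral_le_of_norm_le hx (.of_forall hpointwise) (hq.norm.mul_const _)
    _ = (∫ t in (0 : ℝ)..x, ‖q t‖) / ‖k‖ * B * exp (|k.im| * x) := by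
        rw [intervalIntegral.integral_mul_const]
        ring

-- The maximum `S` of `‖u t‖ e^{-|Im k| t}` satisfies `S ≤ B + S / 2`.
lemma norm_le_of_eq_add_volterraOp (hk : k ≠ 0) (hq : IntervalIntegrable q volume 0 ℓ)
    (hqk : 2 * ∫ t in (0 : ℝ)..ℓ, ‖q t‖ ≤ ‖k‖) (hu : ContinuousOn u (Icc 0 ℓ))
    (hf : ∀ x ∈ Icc 0 ℓ, ‖f x‖ ≤ B * exp (|k.im| * x))
    (huf : ∀ x ∈ Icc 0 ℓ, u x = f x + volterraOp k q u x) (hx : x ∈ Icc 0 ℓ) :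
    ‖u x‖ ≤ 2 * B * exp (|k.im| * x) := by
  obtain ⟨y, hy, hmax⟩ := isCompact_Icc.exists_isMaxOn ⟨x, hx⟩
    (hu.norm.div (g := fun t ↦ exp (|k.im| * t)) (by fun_prop) fun t _ ↦ (exp_pos _).ne')
  set S := ‖u y‖ / exp (|k.im| * y) with hS
  have hbound (t : ℝ) (ht : t ∈ Icc 0 ℓ) : ‖u t‖ ≤ S * exp (|k.im| * t) :=
    (div_le_iff₀ (exp_pos _)).1 (hmax ht)
  have hcontract : (∫ t in (0 : ℝ)..y, ‖q t‖) / ‖k‖ ≤ 1 / 2 := by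
    rw [div_le_iff₀ (norm_pos_iff.2 hk)]
    linarith [integral_norm_mono_right hy hq]
  have hTu : ‖volterraOp k q u y‖ ≤ 1 / 2 * S * exp (|k.im| * y) := by
    refine (norm_volterraOp_le hy.1 (hq.mono_set (uIcc_subset_uIcc_left (Icc_subset_uIcc hy)))
      fun t ht ↦ hbound t ⟨ht.1, ht.2.trans hy.2⟩).trans ?_
    gcongr
  have hS_le : S ≤ B + 1 / 2 * S := by
    rw [hS, div_le_iff₀ (exp_pos _), add_mul, ← hS]
    calc ‖u y‖ = ‖f y + volterraOp k q u y‖ := by rw [← huf y hy]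
      _ ≤ _ := norm_add_le_of_le (hf y hy) hTu
  refine (hbound x hx).trans ?_
  gcongr
  linarith

lemma norm_sub_le_of_norm_residual_le (hk : k ≠ 0) (hq : IntervalIntegrable q volume 0 ℓ)
    (hqk : 2 * ∫ t in (0 : ℝ)..ℓ, ‖q t‖ ≤ ‖k‖)
    (hu : ContinuousOn u (Icc 0 ℓ)) (hv : ContinuousOn v (Icc 0 ℓ))
    (huf : ∀ x ∈ Icc 0 ℓ, u x = f x + volterraOp k q u x)
    (hvf : ∀ x ∈ Icc 0 ℓ, ‖f x + volterraOp k q v x - v x‖ ≤ B * exp (|k.im| * x))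
    (hx : x ∈ Icc 0 ℓ) :
    ‖u x - v x‖ ≤ 2 * B * exp (|k.im| * x) := by
  refine norm_le_of_eq_add_volterraOp (u := u - v) hk hq hqk (hu.sub hv) hvf (fun y hy ↦ ?_) hx
  have hy_sub : uIcc 0 y ⊆ Icc 0 ℓ := by
    rw [uIcc_of_le hy.1]
    exact Icc_subset_Icc_right hy.2
  have hadd := volterraOp_add (k := k) (hq.mono_set (hy_sub.trans Icc_subset_uIcc))
    ((hu.sub hv).mono hy_sub) (hv.mono hy_sub)
  rw [sub_add_cancel] at hadd
  rw [Pi.sub_apply, huf y hy, hadd]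
  ring

end VolterraEquation

section ApproximateSolution

/-- The solution `sin (k x) / k` for the zero potential. -/
noncomputable def freeSolution (k : ℂ) (x : ℝ) : ℂ := Complex.sin (k * x) / k

/-- The term of order `k⁻²` in the expansion of the solution with potential `q`. -/
noncomputable def firstCorrection (k : ℂ) (q : ℝ → ℂ) (x : ℝ) : ℂ :=
  -(Complex.cos (k * x) / k ^ 2 * (1 / 2 * ∫ t in (0 : ℝ)..x, q t))

/-- The amplitude of the term of order `k⁻³` in the expansion of the solution with
potential `q`. -/
noncomputable def secondAmplitude (q : ℝ → ℂ) (x : ℝ) : ℂ :=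
  1 / 4 * (q x + q 0) - 1 / 8 * (∫ t in (0 : ℝ)..x, q t) ^ 2

/-- The term of order `k⁻³` in the expansion of the solution with potential `q`. -/
noncomputable def secondCorrection (k : ℂ) (q : ℝ → ℂ) (x : ℝ) : ℂ :=
  Complex.sin (k * x) / k ^ 3 * secondAmplitude q x

variable {k : ℂ} {q q' : ℝ → ℂ} {x ℓ ε : ℝ}

lemma volterraOp_freeSolution (hk : k ≠ 0) (hx : 0 ≤ x) (hq' : IntervalIntegrable q' volume 0 x)
    (hq : ∀ t ∈ Icc 0 x, q t = q 0 + ∫ u in (0 : ℝ)..t, q' u) :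
    volterraOp k q (freeSolution k) x =
      firstCorrection k q x + Complex.sin (k * x) / k ^ 3 * (1 / 4 * (q x + q 0))
        + 1 / (4 * k ^ 3) * oscillatoryIntegral k q' x := by
  have hqint : IntervalIntegrable q volume 0 x :=
    (uIcc_of_le hx ▸ continuousOn_of_eq_add_integral hq' hq).intervalIntegrable
  have hcos : Continuous fun t : ℝ ↦ Complex.cos (k * ↑(x - 2 * t)) := by fun_prop
  have product_to_sum (t : ℝ) :
      Complex.sin (k * ((x : ℂ) - t)) / k * q t * freeSolution k t
        = 1 / (2 * k ^ 2) * (Complex.cos (k * ↑(x - 2 * t)) * q t)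
          - Complex.cos (k * x) / (2 * k ^ 2) * q t := by
    have hdiff : k * ↑(x - 2 * t) = k * (x - t) - k * t := by push_cast; ring
    have hsum : k * x = k * (x - t) + k * t := by ring
    rw [freeSolution, hdiff, hsum, Complex.cos_sub, Complex.cos_add]
    field_simp
    ring
  have by_parts : ∫ t in (0 : ℝ)..x, Complex.cos (k * ↑(x - 2 * t)) * q t
      = Complex.sin (k * x) / (2 * k) * (q x + q 0)
        + 1 / (2 * k) * oscillatoryIntegral k q' x := by
    have hx_phase : k * ↑(x - 2 * x) = -(k * x) := by push_cast; ring
    have h0_phase : k * ↑(x - 2 * 0) = k * x := by push_cast; ring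
    rw [integral_deriv_mul_eq_of_eq_add_integral hx
      (fun t _ ↦ hasDerivAt_neg_sin_mul_sub_two_mul hk x t) (hcos.intervalIntegrable _ _) hq' hq,
      hx_phase, h0_phase, Complex.sin_neg, oscillatoryIntegral]
    simp only [neg_div, neg_mul, intervalIntegral.integral_neg, div_mul_eq_mul_div,
      intervalIntegral.integral_div]
    ring
  simp only [volterraOp, product_to_sum]
  rw [intervalIntegral.integral_sub ((hqint.continuousOn_mul hcos.continuousOn).const_mul _)
      (hqint.const_mul _), intervalIntegral.integral_const_mul,
    intervalIntegral.integral_const_mul, by_parts, firstCorrection]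
  field_simp
  ring

lemma volterraOp_firstCorrection (hk : k ≠ 0) (hx : 0 ≤ x)
    (hq : IntervalIntegrable q volume 0 x) :
    volterraOp k q (firstCorrection k q) x =
      -(Complex.sin (k * x) / k ^ 3 * (1 / 8 * (∫ t in (0 : ℝ)..x, q t) ^ 2))
        - 1 / (4 * k ^ 3) *
          oscillatoryIntegral k (fun t ↦ q t * ∫ u in (0 : ℝ)..t, q u) x := by
  have hqQ := intervalIntegrable_mul_primitive_self hq
  have hsin : Continuous fun t : ℝ ↦ Complex.sin (k * ↑(x - 2 * t)) := by fun_prop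
  have product_to_sum (t : ℝ) :
      Complex.sin (k * ((x : ℂ) - t)) / k * q t * firstCorrection k q t
        = -(Complex.sin (k * x) / (4 * k ^ 3)) * (q t * ∫ u in (0 : ℝ)..t, q u)
          - 1 / (4 * k ^ 3) *
            (Complex.sin (k * ↑(x - 2 * t)) * (q t * ∫ u in (0 : ℝ)..t, q u)) := by
    have hdiff : k * ↑(x - 2 * t) = k * (x - t) - k * t := by push_cast; ring
    have hsum : k * x = k * (x - t) + k * t := by ring
    rw [firstCorrection, hdiff, hsum, Complex.sin_sub, Complex.sin_add]
    field_simp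
    ring
  simp only [volterraOp, product_to_sum]
  rw [intervalIntegral.integral_sub (hqQ.const_mul _)
      ((hqQ.continuousOn_mul hsin.continuousOn).const_mul _), intervalIntegral.integral_const_mul,
    intervalIntegral.integral_const_mul, integral_mul_primitive_self hx hq, oscillatoryIntegral]
  ring

lemma norm_secondCorrection_le {C : ℝ} (hx : 0 ≤ x) (hC : ‖secondAmplitude q x‖ ≤ C) :
    ‖secondCorrection k q x‖ ≤ C / ‖k‖ ^ 3 * exp (|k.im| * x) := by
  rw [secondCorrection, norm_mul, norm_div, norm_pow]
  calc ‖Complex.sin (k * x)‖ / ‖k‖ ^ 3 * ‖secondAmplitude q x‖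
      ≤ exp (|k.im| * x) / ‖k‖ ^ 3 * C := by
        gcongr
        exact norm_sin_mul_ofReal_le (abs_of_nonneg hx).le
    _ = C / ‖k‖ ^ 3 * exp (|k.im| * x) := by ring

/-- The expansion of the solution with potential `q` up to and including order `k⁻³`. -/
noncomputable def approximateSolution (k : ℂ) (q : ℝ → ℂ) : ℝ → ℂ :=
  freeSolution k + firstCorrection k q + secondCorrection k q

lemma continuous_freeSolution : Continuous (freeSolution k) := by
  unfold freeSolution
  fun_prop

lemma continuousOn_firstCorrection (hq : IntervalIntegrable q volume 0 ℓ) :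
    ContinuousOn (firstCorrection k q) (uIcc 0 ℓ) := by
  have hprim := continuousOn_primitive_interval' hq left_mem_uIcc
  unfold firstCorrection
  fun_prop

lemma continuousOn_secondAmplitude (hq : ContinuousOn q (uIcc 0 ℓ)) :
    ContinuousOn (secondAmplitude q) (uIcc 0 ℓ) := by
  have hprim := continuousOn_primitive_interval' (hq.intervalIntegrable (μ := volume)) left_mem_uIcc
  unfold secondAmplitude
  fun_prop

lemma continuousOn_secondCorrection (hq : ContinuousOn q (uIcc 0 ℓ)) :
    ContinuousOn (secondCorrection k q) (uIcc 0 ℓ) := by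
  have hamplitude := continuousOn_secondAmplitude hq
  unfold secondCorrection
  fun_prop

lemma continuousOn_approximateSolution (hq : ContinuousOn q (uIcc 0 ℓ)) :
    ContinuousOn (approximateSolution k q) (uIcc 0 ℓ) :=
  (continuous_freeSolution.continuousOn.add
    (continuousOn_firstCorrection hq.intervalIntegrable)).add (continuousOn_secondCorrection hq)

lemma residual_approximateSolution (hk : k ≠ 0) (hx : 0 ≤ x)
    (hq' : IntervalIntegrable q' volume 0 x)
    (hq : ∀ t ∈ Icc 0 x, q t = q 0 + ∫ u in (0 : ℝ)..t, q' u) :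
    freeSolution k x + volterraOp k q (approximateSolution k q) x - approximateSolution k q x =
      1 / (4 * k ^ 3) *
          oscillatoryIntegral k (q' - fun t ↦ q t * ∫ u in (0 : ℝ)..t, q u) x
        + volterraOp k q (secondCorrection k q) x := by
  have hqcont : ContinuousOn q (uIcc 0 x) :=
    uIcc_of_le hx ▸ continuousOn_of_eq_add_integral hq' hq
  have hqint := hqcont.intervalIntegrable (μ := volume)
  have hfree := (continuous_freeSolution (k := k)).continuousOn (s := uIcc 0 x)
  have hfirst := continuousOn_firstCorrection (k := k) hqint
  rw [approximateSolution, volterraOp_add hqint (hfree.add hfirst)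
      (continuousOn_secondCorrection hqcont), volterraOp_add hqint hfree hfirst,
    volterraOp_freeSolution hk hx hq' hq, volterraOp_firstCorrection hk hx hqint,
    oscillatoryIntegral_sub hq' (intervalIntegrable_mul_primitive_self hqint)]
  simp only [Pi.add_apply, secondCorrection, secondAmplitude]
  ring

lemma eventually_norm_volterraOp_secondCorrection_le (hq : ContinuousOn q (uIcc 0 ℓ))
    (hε : 0 < ε) :
    ∀ᶠ k in cobounded ℂ, ∀ x ∈ Icc 0 ℓ,
      ‖volterraOp k q (secondCorrection k q) x‖ ≤ ε / ‖k‖ ^ 3 * exp (|k.im| * x) := by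
  have hqint := hq.intervalIntegrable (μ := volume)
  obtain ⟨C, hC⟩ := isCompact_uIcc.exists_bound_of_continuousOn (continuousOn_secondAmplitude hq)
  have hC_nonneg : 0 ≤ C := (norm_nonneg _).trans (hC 0 left_mem_uIcc)
  filter_upwards
    [eventually_cobounded_const_div_norm_le ((∫ t in (0 : ℝ)..ℓ, ‖q t‖) * C) hε] with k hkC x hx
  have hsub : uIcc 0 x ⊆ uIcc 0 ℓ := uIcc_subset_uIcc_left (Icc_subset_uIcc hx)
  calc ‖volterraOp k q (secondCorrection k q) x‖
      ≤ (∫ t in (0 : ℝ)..x, ‖q t‖) / ‖k‖ * (C / ‖k‖ ^ 3) * exp (|k.im| * x) :=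
        norm_volterraOp_le hx.1 (hqint.mono_set hsub) fun t ht ↦
          norm_secondCorrection_le ht.1 (hC t (hsub (Icc_subset_uIcc ht)))
    _ ≤ (∫ t in (0 : ℝ)..ℓ, ‖q t‖) / ‖k‖ * (C / ‖k‖ ^ 3) * exp (|k.im| * x) := by
        gcongr
        exact integral_norm_mono_right hx hqint
    _ = (∫ t in (0 : ℝ)..ℓ, ‖q t‖) * C / ‖k‖ / ‖k‖ ^ 3 * exp (|k.im| * x) := by ring
    _ ≤ ε / ‖k‖ ^ 3 * exp (|k.im| * x) := by gcongr

lemma eventually_norm_residual_approximateSolution_le (hq' : IntervalIntegrable q' volume 0 ℓ)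
    (hq : ∀ t ∈ Icc 0 ℓ, q t = q 0 + ∫ u in (0 : ℝ)..t, q' u) (hε : 0 < ε) :
    ∀ᶠ k in cobounded ℂ, ∀ x ∈ Icc 0 ℓ,
      ‖freeSolution k x + volterraOp k q (approximateSolution k q) x
        - approximateSolution k q x‖ ≤ ε / ‖k‖ ^ 3 * exp (|k.im| * x) := by
  rcases lt_or_ge ℓ 0 with hℓ | hℓ
  · simp [Icc_eq_empty_of_lt hℓ]
  have hqcont : ContinuousOn q (uIcc 0 ℓ) :=
    uIcc_of_le hℓ ▸ continuousOn_of_eq_add_integral hq' hq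
  let g : ℝ → ℂ := q' - fun t ↦ q t * ∫ u in (0 : ℝ)..t, q u
  have hg : IntervalIntegrable g volume 0 ℓ :=
    hq'.sub (intervalIntegrable_mul_primitive_self hqcont.intervalIntegrable)
  filter_upwards [eventually_ne_cobounded 0,
    eventually_norm_oscillatoryIntegral_le hg (by positivity : 0 < 2 * ε),
    eventually_norm_volterraOp_secondCorrection_le hqcont (half_pos hε)]
    with k hk hoscillating hsecond x hx
  rw [residual_approximateSolution hk hx.1
    (hq'.mono_set (uIcc_subset_uIcc_left (Icc_subset_uIcc hx)))
    fun t ht ↦ hq t ⟨ht.1, ht.2.trans hx.2⟩]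
  calc ‖1 / (4 * k ^ 3) * oscillatoryIntegral k g x + volterraOp k q (secondCorrection k q) x‖
      ≤ 1 / (4 * ‖k‖ ^ 3) * ‖oscillatoryIntegral k g x‖
          + ‖volterraOp k q (secondCorrection k q) x‖ :=
        (norm_add_le _ _).trans_eq (by simp)
    _ ≤ 1 / (4 * ‖k‖ ^ 3) * (2 * ε * exp (|k.im| * x))
          + ε / 2 / ‖k‖ ^ 3 * exp (|k.im| * x) := by
        gcongr
        · exact hoscillating x hx
        · exact hsecond x hx
    _ = ε / ‖k‖ ^ 3 * exp (|k.im| * x) := by ring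

end ApproximateSolution

theorem gelfand_levitan_s_asymptotics_general
    (ℓ : ℝ) (q q' : ℝ → ℂ)
    (hq' : IntervalIntegrable q' volume 0 ℓ)
    (hq : ∀ x ∈ Icc (0 : ℝ) ℓ, q x = q 0 + ∫ t in (0 : ℝ)..x, q' t)
    (s : ℂ → ℝ → ℂ)
    (hscont : ∀ k : ℂ, k ≠ 0 → ContinuousOn (s k) (Icc 0 ℓ))
    (hs : ∀ k : ℂ, k ≠ 0 → ∀ x ∈ Icc (0 : ℝ) ℓ,
      s k x = Complex.sin (k * x) / k +
        ∫ t in (0 : ℝ)..x, (Complex.sin (k * ((x : ℂ) - t)) / k) * q t * s k t) :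
    ∀ ε > 0, ∃ K > 0, ∀ k : ℂ, K ≤ ‖k‖ → ∀ x ∈ Icc (0 : ℝ) ℓ,
      ‖s k x - Complex.sin (k * x) / k
          + (Complex.cos (k * x) / k ^ 2) * ((1 / 2 : ℂ) * ∫ t in (0 : ℝ)..x, q t)
          - (Complex.sin (k * x) / k ^ 3) *
              ((1 / 4 : ℂ) * (q x + q 0) - (1 / 8 : ℂ) * (∫ t in (0 : ℝ)..x, q t) ^ 2)‖
        ≤ ε * exp (|k.im| * x) / ‖k‖ ^ 3 := by
  intro ε hε
  obtain ⟨r, -, hr⟩ := hasBasis_cobounded_norm.eventually_iff.1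
    (eventually_norm_residual_approximateSolution_le hq' hq (half_pos hε))
  refine ⟨max (max r 1) (2 * ∫ t in (0 : ℝ)..ℓ, ‖q t‖), by positivity, fun k hk x hx ↦ ?_⟩
  obtain ⟨⟨hrk, h1k⟩, hqk⟩ := (max_le_iff.1 hk).imp_left max_le_iff.1
  have hk0 : k ≠ 0 := norm_pos_iff.1 (zero_lt_one.trans_le h1k)
  have hqcont : ContinuousOn q (uIcc 0 ℓ) :=
    uIcc_of_le (hx.1.trans hx.2) ▸ continuousOn_of_eq_add_integral hq' hq
  calc _ = ‖s k x - approximateSolution k q x‖ := by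
        simp only [approximateSolution, freeSolution, firstCorrection, secondCorrection,
          secondAmplitude, Pi.add_apply]
        ring_nf
    _ ≤ 2 * (ε / 2 / ‖k‖ ^ 3) * exp (|k.im| * x) :=
        norm_sub_le_of_norm_residual_le hk0 hqcont.intervalIntegrable hqk (hscont k hk0)
          ((continuousOn_approximateSolution hqcont).mono Icc_subset_uIcc) (hs k hk0) (hr hrk) hx
    _ = ε * exp (|k.im| * x) / ‖k‖ ^ 3 := by ring

/-- Asymptotics of the solution `s(·, k)` of the Volterra integral equation
`s(x,k) = sin(kx)/k + ∫₀ˣ (sin(k(x−t))/k) q(t) s(t,k) dt` on `[0, ℓ]`, where the potential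
`q` is absolutely continuous with derivative `q' ∈ L¹((0,ℓ))`. -/
theorem gelfand_levitan_s_asymptotics
    (ℓ : ℝ) (hℓ : 0 < ℓ) (q q' : ℝ → ℝ)
    (hq' : IntervalIntegrable q' volume 0 ℓ)
    (hq : ∀ x ∈ Set.Icc (0 : ℝ) ℓ, q x = q 0 + ∫ t in (0 : ℝ)..x, q' t)
    (s : ℂ → ℝ → ℂ)
    (hscont : ∀ k : ℂ, k ≠ 0 → ContinuousOn (s k) (Set.Icc 0 ℓ))
    (hs : ∀ k : ℂ, k ≠ 0 → ∀ x ∈ Set.Icc (0 : ℝ) ℓ,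
      s k x = Complex.sin (k * x) / k +
        ∫ t in (0 : ℝ)..x, (Complex.sin (k * ((x : ℂ) - t)) / k) * (q t : ℂ) * s k t) :
    ∀ ε > 0, ∃ K > 0, ∀ k : ℂ, K ≤ ‖k‖ → ∀ x ∈ Set.Icc (0 : ℝ) ℓ,
      ‖s k x - Complex.sin (k * x) / k
          + (Complex.cos (k * x) / k ^ 2) * ((1 / 2 : ℂ) * ∫ t in (0 : ℝ)..x, (q t : ℂ))
          - (Complex.sin (k * x) / k ^ 3) *
              ((1 / 4 : ℂ) * ((q x : ℂ) + (q 0 : ℂ))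
                - (1 / 8 : ℂ) * (∫ t in (0 : ℝ)..x, (q t : ℂ)) ^ 2)‖
        ≤ ε * Real.exp (|k.im| * x) / ‖k‖ ^ 3 :=
  gelfand_levitan_s_asymptotics_general ℓ (q ·) (q' ·) ⟨hq'.1.ofReal, hq'.2.ofReal⟩
    (fun x hx ↦ by rw [hq x hx, Complex.ofReal_add, intervalIntegral.integral_ofReal]) s hscont hs
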